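/- (Robust continuity, Lemma 5.2.) For all admissible pairs (χ,w) and (τ,v), B_θ((χ,w),(τ,v)) ≤ 2 |||(χ,w)|||_{eg,θ} · |||(τ,v)|||_{full,θ}, with the constant 2 independent of ν and θ. -/

import Mathlib

open MeasureTheory

noncomputable section

/-- Frobenius inner product of two `d × d` arrays. -/
def fro {d : ℕ} (S T : Fin d → Fin d → ℝ) : ℝ := ∑ i, ∑ j, S i j * T i j

/-- The deviatoric map `A M = M − (tr M / d) • I`. -/
def devM {d : ℕ} (M : Fin d → Fin d → ℝ) : Fin d → Fin d → ℝ :=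
  fun i j => M i j - ((∑ k, M k k) / (d : ℝ)) * (if i = j then 1 else 0)

/-- Partial derivative of a scalar field in the `j`-th coordinate direction. -/
def pd {d : ℕ} (f : (Fin d → ℝ) → ℝ) (x : Fin d → ℝ) (j : Fin d) : ℝ :=
  fderiv ℝ f x (Pi.single j 1)

/-- Jacobian matrix `(∂v_i/∂x_j)` of a vector field. -/
def jac {d : ℕ} (v : (Fin d → ℝ) → Fin d → ℝ) (x : Fin d → ℝ) : Fin d → Fin d → ℝ :=
  fun i j => pd (fun y => v y i) x j

/-- Symmetric gradient `ε(v) = (∇v + (∇v)^T)/2`. -/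
def epsV {d : ℕ} (v : (Fin d → ℝ) → Fin d → ℝ) (x : Fin d → ℝ) : Fin d → Fin d → ℝ :=
  fun i j => (jac v x i j + jac v x j i) / 2

/-- Row-wise divergence `(∇·τ)_i = Σ_j ∂_j τ_{ij}` of a matrix-valued field. -/
def divT {d : ℕ} (τ : (Fin d → ℝ) → Fin d → Fin d → ℝ) (x : Fin d → ℝ) (i : Fin d) : ℝ :=
  ∑ j, pd (fun y => τ y i j) x j

/-- A pair `(τ, v)` is admissible: `τ` is `C¹` on `Ω`, `v` is `C¹` with compact
support contained in `Ω`, and the four weighted integrals are finite. -/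
def Admissible {d : ℕ} (Ω : Set (Fin d → ℝ)) (ν θ : (Fin d → ℝ) → ℝ)
    (τ : (Fin d → ℝ) → Fin d → Fin d → ℝ) (v : (Fin d → ℝ) → Fin d → ℝ) : Prop :=
  (∀ i j, ContDiffOn ℝ 1 (fun x => τ x i j) Ω) ∧
    ContDiff ℝ 1 v ∧ HasCompactSupport v ∧ tsupport v ⊆ Ω ∧
    IntegrableOn (fun x => (ν x)⁻¹ * fro (τ x) (τ x)) Ω ∧
    IntegrableOn (fun x => ν x * fro (jac v x) (jac v x)) Ω ∧
    IntegrableOn (fun x => (ν x / θ x) * ∑ i, (v x i) ^ 2) Ω ∧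
    IntegrableOn (fun x => (θ x / ν x) * ∑ i, (divT τ x i) ^ 2) Ω

/-- The augmented (non-symmetric) bilinear form `B_θ`. -/
def Bform {d : ℕ} (Ω : Set (Fin d → ℝ)) (ν θ : (Fin d → ℝ) → ℝ)
    (χ : (Fin d → ℝ) → Fin d → Fin d → ℝ) (w : (Fin d → ℝ) → Fin d → ℝ)
    (τ : (Fin d → ℝ) → Fin d → Fin d → ℝ) (v : (Fin d → ℝ) → Fin d → ℝ) : ℝ :=
  (∫ x in Ω, (ν x)⁻¹ * fro (devM (χ x)) (τ x))
    - 2 * (∫ x in Ω, fro (epsV w x) (τ x))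
    + 2 * (∫ x in Ω, fro (epsV v x) (χ x))
    - (∫ x in Ω, fro (devM (χ x)) (epsV v x))
    + (∫ x in Ω, fro (devM (τ x)) (epsV w x))
    + (∫ x in Ω, ν x * fro (epsV w x) (epsV v x))
    + (∫ x in Ω, (θ x / ν x) * ∑ i, divT χ x i * divT τ x i)

/-- The weighted energy norm `|||(τ,v)|||_{eg,θ}`. -/
def normEg {d : ℕ} (Ω : Set (Fin d → ℝ)) (ν θ : (Fin d → ℝ) → ℝ)
    (τ : (Fin d → ℝ) → Fin d → Fin d → ℝ) (v : (Fin d → ℝ) → Fin d → ℝ) : ℝ :=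
  Real.sqrt ((∫ x in Ω, ν x * fro (epsV v x) (epsV v x))
    + (∫ x in Ω, (ν x)⁻¹ * fro (devM (τ x)) (devM (τ x)))
    + (∫ x in Ω, (θ x / ν x) * ∑ i, (divT τ x i) ^ 2))

/-- The weighted full norm `|||(τ,v)|||_{full,θ}`. -/
def normFull {d : ℕ} (Ω : Set (Fin d → ℝ)) (ν θ : (Fin d → ℝ) → ℝ)
    (τ : (Fin d → ℝ) → Fin d → Fin d → ℝ) (v : (Fin d → ℝ) → Fin d → ℝ) : ℝ :=
  Real.sqrt ((∫ x in Ω, ν x * fro (jac v x) (jac v x))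
    + (∫ x in Ω, (ν x / θ x) * ∑ i, (v x i) ^ 2)
    + (∫ x in Ω, (ν x)⁻¹ * fro (τ x) (τ x))
    + (∫ x in Ω, (θ x / ν x) * ∑ i, (divT τ x i) ^ 2))

/-!
Polarisation replaces `⟨ε(v), χ⟩` by `⟨∇v, χ⟩ - ⟨ω(v), χ⟩`; the first term integrates by parts to
`-v · ∇·χ`, and the second sees only `Aχ` because `ω(v)` is trace free. Hence `B_θ` is the energy
inner product of `(ε(w), Aχ, ∇·χ)` with the dual triple
`(ε(v) + ν⁻¹(Aτ - 2τ), Aτ - ν(ε(v) + 2ω(v)), ∇·τ - 2(ν/θ)v)`.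
Expanding the squares, the energy of the dual triple is at most four times the density of the full
norm minus `4 (⟨∇v, τ⟩ + v · ∇·τ)`. Bounding the cross terms by Young's inequality would cost a
constant larger than `2`; instead they integrate to zero, by the same integration by parts.
-/

section CauchySchwarz

variable {X : Type*} [MeasurableSpace X] {μ : Measure X} {f p q : X → ℝ}

lemma integrable_of_sq_le_mul (hf : AEStronglyMeasurable f μ) (hp : Integrable p μ)
    (hq : Integrable q μ) (h : ∀ᵐ x ∂μ, 0 ≤ p x ∧ 0 ≤ q x ∧ f x ^ 2 ≤ p x * q x) :
    Integrable f μ := by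
  refine (hp.add hq).mono' hf ?_
  filter_upwards [h] with x ⟨hpx, hqx, hx⟩
  refine abs_le_of_sq_le_sq ?_ (add_nonneg hpx hqx)
  calc f x ^ 2 ≤ p x * q x := hx
    _ ≤ (p x + q x) ^ 2 := by nlinarith [mul_nonneg hpx hqx]

lemma sq_integral_le_integral_mul_integral (hf : Integrable f μ) (hp : Integrable p μ)
    (hq : Integrable q μ) (h : ∀ᵐ x ∂μ, 0 ≤ p x ∧ 0 ≤ q x ∧ f x ^ 2 ≤ p x * q x) :
    (∫ x, f x ∂μ) ^ 2 ≤ (∫ x, p x ∂μ) * ∫ x, q x ∂μ := by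
  have hquad (t : ℝ) : 0 ≤ (∫ x, p x ∂μ) * (t * t) + -(2 * ∫ x, f x ∂μ) * t + ∫ x, q x ∂μ := by
    have hmono : ∫ x, 2 * f x * t ∂μ ≤ ∫ x, (p x * t ^ 2 + q x) ∂μ := by
      refine integral_mono_ae ((hf.const_mul 2).mul_const t) ((hp.mul_const _).add hq) ?_
      filter_upwards [h] with x ⟨hpx, hqx, hx⟩
      rw [mul_assoc]
      refine two_mul_le_add_of_sq_le_mul (mul_nonneg hpx (sq_nonneg t)) hqx ?_
      rw [mul_pow, mul_right_comm]
      exact mul_le_mul_of_nonneg_right hx (sq_nonneg t)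
    rw [integral_add (hp.mul_const _) hq, integral_mul_const, integral_mul_const,
      integral_const_mul] at hmono
    linarith
  have hdiscrim := discrim_le_zero hquad
  rw [discrim] at hdiscrim
  linarith

end CauchySchwarz

section MatrixAlgebra

variable {d : ℕ}

lemma fro_comm (S T : Fin d → Fin d → ℝ) : fro S T = fro T S := by
  simp only [fro, mul_comm]

lemma fro_add_left (R S T : Fin d → Fin d → ℝ) : fro (R + S) T = fro R T + fro S T := by
  simp only [fro, Pi.add_apply, add_mul, Finset.sum_add_distrib]

lemma fro_smul_left (c : ℝ) (S T : Fin d → Fin d → ℝ) : fro (c • S) T = c * fro S T := by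
  simp only [fro, Pi.smul_apply, smul_eq_mul, mul_assoc, Finset.mul_sum]

lemma fro_sub_left (R S T : Fin d → Fin d → ℝ) : fro (R - S) T = fro R T - fro S T := by
  simp only [fro, Pi.sub_apply, sub_mul, Finset.sum_sub_distrib]

lemma fro_add_right (R S T : Fin d → Fin d → ℝ) : fro R (S + T) = fro R S + fro R T := by
  simp only [fro_comm R, fro_add_left]

lemma fro_smul_right (c : ℝ) (S T : Fin d → Fin d → ℝ) : fro S (c • T) = c * fro S T := by
  simp only [fro_comm S, fro_smul_left]

lemma fro_sub_right (R S T : Fin d → Fin d → ℝ) : fro R (S - T) = fro R S - fro R T := by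
  simp only [fro_comm R, fro_sub_left]

lemma fro_self_nonneg (S : Fin d → Fin d → ℝ) : 0 ≤ fro S S :=
  Finset.sum_nonneg fun _ _ => Finset.sum_nonneg fun _ _ => mul_self_nonneg _

lemma sq_fro_le (S T : Fin d → Fin d → ℝ) : fro S T ^ 2 ≤ fro S S * fro T T := by
  simp only [fro, ← Fintype.sum_prod_type']
  simpa only [sq] using
    Finset.sum_mul_sq_le_sq_mul_sq Finset.univ (fun k : Fin d × Fin d => S k.1 k.2)
      (fun k => T k.1 k.2)

lemma continuous_fro :
    Continuous fun p : (Fin d → Fin d → ℝ) × (Fin d → Fin d → ℝ) => fro p.1 p.2 := by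
  unfold fro
  fun_prop

lemma sum_diag_devM (M : Fin d → Fin d → ℝ) : ∑ k, devM M k k = 0 := by
  rcases Nat.eq_zero_or_pos d with rfl | hd
  · simp
  · have : (d : ℝ) ≠ 0 := by positivity
    simp only [devM, if_true, mul_one, Finset.sum_sub_distrib, Finset.sum_const, Finset.card_univ,
      Fintype.card_fin, nsmul_eq_mul]
    field_simp
    ring

lemma continuous_devM : Continuous (devM : (Fin d → Fin d → ℝ) → Fin d → Fin d → ℝ) := by
  unfold devM
  fun_prop

lemma fro_devM_left_of_sum_diag_eq_zero (M : Fin d → Fin d → ℝ) {N : Fin d → Fin d → ℝ}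
    (hN : ∑ k, N k k = 0) : fro (devM M) N = fro M N := by
  simp only [fro, devM, sub_mul, Finset.sum_sub_distrib, mul_assoc, ite_mul, one_mul, zero_mul,
    mul_ite, mul_zero, Finset.sum_ite_eq, Finset.mem_univ, if_true, ← Finset.mul_sum, hN, sub_zero]

lemma fro_devM_devM (M N : Fin d → Fin d → ℝ) : fro (devM M) (devM N) = fro (devM M) N := by
  rw [fro_comm, fro_devM_left_of_sum_diag_eq_zero N (sum_diag_devM M), fro_comm]

lemma fro_devM_self_le (M : Fin d → Fin d → ℝ) : fro (devM M) (devM M) ≤ fro M M := by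
  have hpyth : fro (M - devM M) (M - devM M) = fro M M - fro (devM M) (devM M) := by
    simp only [fro_sub_left, fro_sub_right, fro_devM_devM, fro_comm M (devM M)]
    ring
  linarith [fro_self_nonneg (M - devM M)]

end MatrixAlgebra

section IntegrationByParts

variable {E : Type*} [NormedAddCommGroup E] [NormedSpace ℝ E] {Ω : Set E} {f g t : E → ℝ}

lemma contDiff_mul_of_tsupport_subset (hΩ : IsOpen Ω) (hf : ContDiff ℝ 1 f)
    (hs : tsupport f ⊆ Ω) (ht : ContDiffOn ℝ 1 t Ω) : ContDiff ℝ 1 fun x => f x * t x :=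
  contMDiff_iff_contDiff.1 <| contMDiff_of_tsupport fun _ hx =>
    (hf.contDiffAt.mul (ht.contDiffAt (hΩ.mem_nhds (hs (tsupport_mul_subset_left hx))))).contMDiffAt

lemma eqOn_fderiv_mul_apply (hΩ : IsOpen Ω) (hf : ContDiff ℝ 1 f) (ht : ContDiffOn ℝ 1 t Ω)
    (e : E) : Set.EqOn (fun x => fderiv ℝ (fun y => f y * t y) x e)
      (fun x => fderiv ℝ f x e * t x + f x * fderiv ℝ t x e) Ω := fun x hx => by
  have htx := (ht.contDiffAt (hΩ.mem_nhds hx)).differentiableAt one_ne_zero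
  simp only [fderiv_fun_mul (hf.differentiable one_ne_zero x) htx, add_apply, smul_apply,
    smul_eq_mul]
  ring

variable [MeasurableSpace E] [BorelSpace E] {μ : Measure E}

lemma integrable_fderiv_apply_of_hasCompactSupport [IsFiniteMeasureOnCompacts μ]
    (hg : ContDiff ℝ 1 g) (hc : HasCompactSupport g) (e : E) :
    Integrable (fun x => fderiv ℝ g x e) μ :=
  ((hg.continuous_fderiv one_ne_zero).clm_apply continuous_const).integrable_of_hasCompactSupport
    (hc.fderiv_apply ℝ e)

lemma integrableOn_fderiv_mul_add_mul_fderiv [IsFiniteMeasureOnCompacts μ] (hΩ : IsOpen Ω)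
    (hf : ContDiff ℝ 1 f) (hc : HasCompactSupport f) (hs : tsupport f ⊆ Ω)
    (ht : ContDiffOn ℝ 1 t Ω) (e : E) :
    IntegrableOn (fun x => fderiv ℝ f x e * t x + f x * fderiv ℝ t x e) Ω μ :=
  (integrable_fderiv_apply_of_hasCompactSupport (contDiff_mul_of_tsupport_subset hΩ hf hs ht)
    hc.mul_right e).integrableOn.congr_fun (eqOn_fderiv_mul_apply hΩ hf ht e) hΩ.measurableSet

variable [FiniteDimensional ℝ E] [μ.IsAddHaarMeasure]

lemma integral_fderiv_apply_eq_zero_of_hasCompactSupport (hg : ContDiff ℝ 1 g)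
    (hc : HasCompactSupport g) (e : E) : ∫ x, fderiv ℝ g x e ∂μ = 0 := by
  simpa using integral_mul_fderiv_eq_neg_fderiv_mul_of_integrable (𝕜 := ℝ) (μ := μ)
    (f := fun _ => 1) (g := g) (v := e) (by simp)
    (by simpa using integrable_fderiv_apply_of_hasCompactSupport hg hc e)
    (by simpa using hg.continuous.integrable_of_hasCompactSupport hc)
    (fun x _ => differentiableAt_const _) (fun x _ => hg.differentiable one_ne_zero x)

lemma setIntegral_fderiv_mul_add_mul_fderiv_eq_zero (hΩ : IsOpen Ω) (hf : ContDiff ℝ 1 f)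
    (hc : HasCompactSupport f) (hs : tsupport f ⊆ Ω) (ht : ContDiffOn ℝ 1 t Ω) (e : E) :
    ∫ x in Ω, (fderiv ℝ f x e * t x + f x * fderiv ℝ t x e) ∂μ = 0 := by
  rw [← setIntegral_congr_fun hΩ.measurableSet (eqOn_fderiv_mul_apply hΩ hf ht e),
    setIntegral_eq_integral_of_forall_compl_eq_zero]
  · exact integral_fderiv_apply_eq_zero_of_hasCompactSupport
      (contDiff_mul_of_tsupport_subset hΩ hf hs ht) hc.mul_right e
  · intro x hx
    have hxf : x ∉ tsupport fun y => f y * t y := fun h => hx (hs (tsupport_mul_subset_left h))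
    rw [fderiv_of_notMem_tsupport ℝ hxf, zero_apply]

end IntegrationByParts

section NullDensity

variable {d : ℕ} {Ω : Set (Fin d → ℝ)} {τ : (Fin d → ℝ) → Fin d → Fin d → ℝ}
  {v : (Fin d → ℝ) → Fin d → ℝ}

/-- The null Lagrangian `⟨∇v, τ⟩_F + v · ∇·τ`, that is, the divergence of `τᵀ v`. -/
def nullDensity (τ : (Fin d → ℝ) → Fin d → Fin d → ℝ) (v : (Fin d → ℝ) → Fin d → ℝ)
    (x : Fin d → ℝ) : ℝ :=
  fro (jac v x) (τ x) + ∑ i, v x i * divT τ x i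

lemma nullDensity_eq_sum (τ : (Fin d → ℝ) → Fin d → Fin d → ℝ) (v : (Fin d → ℝ) → Fin d → ℝ) :
    nullDensity τ v = fun x =>
      ∑ i, ∑ j, (pd (fun y => v y i) x j * τ x i j + v x i * pd (fun y => τ y i j) x j) := by
  funext x
  simp only [nullDensity, fro, jac, divT, Finset.mul_sum, ← Finset.sum_add_distrib]

lemma integrableOn_nullDensity_summand (hΩ : IsOpen Ω)
    (hτ : ∀ i j, ContDiffOn ℝ 1 (fun x => τ x i j) Ω) (hv : ContDiff ℝ 1 v)
    (hc : HasCompactSupport v) (hs : tsupport v ⊆ Ω) (i j : Fin d) :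
    IntegrableOn (fun x => pd (fun y => v y i) x j * τ x i j + v x i * pd (fun y => τ y i j) x j)
      Ω :=
  integrableOn_fderiv_mul_add_mul_fderiv hΩ (contDiff_pi.1 hv i)
    (hc.comp_left (g := fun y : Fin d → ℝ => y i) rfl)
    ((tsupport_comp_subset (g := fun y : Fin d → ℝ => y i) rfl v).trans hs) (hτ i j) _

lemma integrableOn_nullDensity (hΩ : IsOpen Ω)
    (hτ : ∀ i j, ContDiffOn ℝ 1 (fun x => τ x i j) Ω) (hv : ContDiff ℝ 1 v)
    (hc : HasCompactSupport v) (hs : tsupport v ⊆ Ω) : IntegrableOn (nullDensity τ v) Ω := by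
  rw [nullDensity_eq_sum]
  exact integrable_finsetSum _ fun i _ => integrable_finsetSum _ fun j _ =>
    integrableOn_nullDensity_summand hΩ hτ hv hc hs i j

lemma setIntegral_nullDensity_eq_zero (hΩ : IsOpen Ω)
    (hτ : ∀ i j, ContDiffOn ℝ 1 (fun x => τ x i j) Ω) (hv : ContDiff ℝ 1 v)
    (hc : HasCompactSupport v) (hs : tsupport v ⊆ Ω) : ∫ x in Ω, nullDensity τ v x = 0 := by
  have hint := integrableOn_nullDensity_summand hΩ hτ hv hc hs
  simp only [nullDensity_eq_sum]
  rw [integral_finsetSum _ fun i _ => integrable_finsetSum _ fun j _ => hint i j]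
  refine Finset.sum_eq_zero fun i _ => ?_
  rw [integral_finsetSum _ fun j _ => hint i j]
  exact Finset.sum_eq_zero fun j _ => setIntegral_fderiv_mul_add_mul_fderiv_eq_zero hΩ
    (contDiff_pi.1 hv i) (hc.comp_left (g := fun y : Fin d → ℝ => y i) rfl)
    ((tsupport_comp_subset (g := fun y : Fin d → ℝ => y i) rfl v).trans hs) (hτ i j) _

end NullDensity

section EnergyForm

variable {d : ℕ}

/-- The pointwise inner product of the energy norm on triples (strain, stress, divergence), with
`n` the value of `ν` and `m` that of `θ / ν`. -/
def egInner (n m : ℝ) (p q : (Fin d → Fin d → ℝ) × (Fin d → Fin d → ℝ) × (Fin d → ℝ)) : ℝ :=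
  n * fro p.1 q.1 + n⁻¹ * fro p.2.1 q.2.1 + m * ∑ i, p.2.2 i * q.2.2 i

/-- The triple representing, in the energy inner product, the functional that `B_θ` induces once
the null Lagrangian is subtracted. Here `T, E, O, u, b` are the values of `τ, ε(v), ω(v), v, ∇·τ`,
and `n`, `m` those of `ν`, `θ / ν`. -/
def dualTriple (n m : ℝ) (T E O : Fin d → Fin d → ℝ) (u b : Fin d → ℝ) :
    (Fin d → Fin d → ℝ) × (Fin d → Fin d → ℝ) × (Fin d → ℝ) :=
  (E + n⁻¹ • (devM T - (2 : ℝ) • T), devM T - n • (E + (2 : ℝ) • O),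
    b - (2 * m⁻¹) • u)

variable {n m : ℝ}

lemma egInner_self_nonneg (hn : 0 ≤ n) (hm : 0 ≤ m)
    (p : (Fin d → Fin d → ℝ) × (Fin d → Fin d → ℝ) × (Fin d → ℝ)) : 0 ≤ egInner n m p p := by
  have h₁ := fro_self_nonneg p.1
  have h₂ := fro_self_nonneg p.2.1
  have h₃ : 0 ≤ ∑ i, p.2.2 i * p.2.2 i := Finset.sum_nonneg fun i _ => mul_self_nonneg _
  unfold egInner
  positivity

lemma sq_egInner_le (hn : 0 ≤ n) (hm : 0 ≤ m)
    (p q : (Fin d → Fin d → ℝ) × (Fin d → Fin d → ℝ) × (Fin d → ℝ)) :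
    egInner n m p q ^ 2 ≤ egInner n m p p * egInner n m q q := by
  have hdiv : (∑ i, p.2.2 i * q.2.2 i) ^ 2 ≤
      (∑ i, p.2.2 i * p.2.2 i) * ∑ i, q.2.2 i * q.2.2 i := by
    simpa only [sq] using Finset.sum_mul_sq_le_sq_mul_sq Finset.univ p.2.2 q.2.2
  have hweight {c a b r : ℝ} (h : r ^ 2 ≤ a * b) : (c * r) ^ 2 ≤ c * a * (c * b) := by
    linarith [mul_le_mul_of_nonneg_left h (sq_nonneg c)]
  have hn' := inv_nonneg.2 hn
  have hnonneg (S : Fin d → ℝ) : 0 ≤ ∑ i, S i * S i :=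
    Finset.sum_nonneg fun i _ => mul_self_nonneg _
  have key := Finset.sum_sq_le_sum_mul_sum_of_sq_le_mul (Finset.univ : Finset (Fin 3))
    (r := ![n * fro p.1 q.1, n⁻¹ * fro p.2.1 q.2.1, m * ∑ i, p.2.2 i * q.2.2 i])
    (f := ![n * fro p.1 p.1, n⁻¹ * fro p.2.1 p.2.1, m * ∑ i, p.2.2 i * p.2.2 i])
    (g := ![n * fro q.1 q.1, n⁻¹ * fro q.2.1 q.2.1, m * ∑ i, q.2.2 i * q.2.2 i])
    (by simp [Fin.forall_fin_succ, mul_nonneg, fro_self_nonneg, *])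
    (by simp [Fin.forall_fin_succ, mul_nonneg, fro_self_nonneg, *])
    (by simp [Fin.forall_fin_succ, hweight, sq_fro_le, hdiv])
  simpa [Fin.sum_univ_three, egInner] using key

lemma egInner_dualTriple (hn : n ≠ 0) (hm : m ≠ 0) (X W T E : Fin d → Fin d → ℝ)
    {O : Fin d → Fin d → ℝ} (hO : ∑ k, O k k = 0) (a u b : Fin d → ℝ) :
    egInner n m (W, devM X, a) (dualTriple n m T E O u b) =
      n⁻¹ * fro (devM X) T - 2 * fro W T + 2 * fro E X - fro (devM X) E + fro (devM T) W
        + n * fro W E + m * ∑ i, a i * b i - 2 * (fro (E + O) X + ∑ i, u i * a i) := by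
  have hdiv : m * ∑ i, a i * (b - (2 * m⁻¹) • u) i = m * ∑ i, a i * b i - 2 * ∑ i, u i * a i := by
    simp only [Finset.mul_sum, ← Finset.sum_sub_distrib, Pi.sub_apply, Pi.smul_apply, smul_eq_mul]
    exact Finset.sum_congr rfl fun i _ => by field_simp
  simp only [egInner, dualTriple, hdiv, fro_add_left, fro_add_right, fro_sub_right, fro_smul_right,
    fro_devM_devM, fro_devM_left_of_sum_diag_eq_zero X hO, fro_comm W (devM T), fro_comm O X]
  field_simp
  ring

lemma egInner_dualTriple_self (hn : n ≠ 0) (hm : m ≠ 0) (T : Fin d → Fin d → ℝ)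
    {E O : Fin d → Fin d → ℝ} (hEO : fro E O = 0) (hO : ∑ k, O k k = 0) (u b : Fin d → ℝ) :
    egInner n m (dualTriple n m T E O u b) (dualTriple n m T E O u b) =
      4 * (n * fro (E + O) (E + O) + m⁻¹ * ∑ i, u i ^ 2 + n⁻¹ * fro T T + m * ∑ i, b i ^ 2
        - (fro (E + O) T + ∑ i, u i * b i))
        - (2 * n * fro E E + 2 * n⁻¹ * fro (devM T) (devM T) + 3 * m * ∑ i, b i ^ 2) := by
  have hdiv : m * ∑ i, (b - (2 * m⁻¹) • u) i * (b - (2 * m⁻¹) • u) i =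
      m * ∑ i, b i ^ 2 - 4 * ∑ i, u i * b i + 4 * m⁻¹ * ∑ i, u i ^ 2 := by
    simp only [Finset.mul_sum, ← Finset.sum_sub_distrib, ← Finset.sum_add_distrib, Pi.sub_apply,
      Pi.smul_apply, smul_eq_mul]
    exact Finset.sum_congr rfl fun i _ => by field_simp; ring
  simp only [egInner, dualTriple, hdiv, fro_add_left, fro_add_right, fro_sub_left, fro_sub_right,
    fro_smul_left, fro_smul_right, fro_devM_devM, fro_comm E (devM T), fro_comm O (devM T),
    fro_comm T (devM T), fro_comm T E, fro_comm T O, fro_comm O E, hEO,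
    fro_devM_left_of_sum_diag_eq_zero T hO]
  field_simp
  ring

end EnergyForm

section Densities

variable {d : ℕ}

/-- Skew gradient `ω(v) = (∇v - (∇v)^T)/2`. -/
def omegaV (v : (Fin d → ℝ) → Fin d → ℝ) (x : Fin d → ℝ) : Fin d → Fin d → ℝ :=
  fun i j => (jac v x i j - jac v x j i) / 2

variable (v : (Fin d → ℝ) → Fin d → ℝ) (x : Fin d → ℝ)

lemma epsV_add_omegaV : epsV v x + omegaV v x = jac v x := by
  funext i j
  simp only [epsV, omegaV, Pi.add_apply]
  ring

lemma sum_diag_omegaV : ∑ k, omegaV v x k k = 0 := by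
  simp only [omegaV, sub_self, zero_div, Finset.sum_const_zero]

lemma fro_epsV_omegaV : fro (epsV v x) (omegaV v x) = 0 := by
  have hswap : fro (epsV v x) (omegaV v x) = -fro (epsV v x) (omegaV v x) := by
    conv_lhs => rw [fro, Finset.sum_comm]
    simp only [fro, ← Finset.sum_neg_distrib]
    refine Finset.sum_congr rfl fun i _ => Finset.sum_congr rfl fun j _ => ?_
    simp only [epsV, omegaV]
    ring
  linarith

lemma fro_epsV_self_le : fro (epsV v x) (epsV v x) ≤ fro (jac v x) (jac v x) := by
  have hpyth : fro (jac v x) (jac v x) =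
      fro (epsV v x) (epsV v x) + fro (omegaV v x) (omegaV v x) := by
    simp only [← epsV_add_omegaV, fro_add_left, fro_add_right, fro_comm (omegaV v x) (epsV v x),
      fro_epsV_omegaV]
    ring
  linarith [fro_self_nonneg (omegaV v x)]

/-- The integrand of `B_θ`. -/
def formDensity (ν θ : (Fin d → ℝ) → ℝ) (χ : (Fin d → ℝ) → Fin d → Fin d → ℝ)
    (w : (Fin d → ℝ) → Fin d → ℝ) (τ : (Fin d → ℝ) → Fin d → Fin d → ℝ)
    (v : (Fin d → ℝ) → Fin d → ℝ) (x : Fin d → ℝ) : ℝ :=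
  (ν x)⁻¹ * fro (devM (χ x)) (τ x) - 2 * fro (epsV w x) (τ x) + 2 * fro (epsV v x) (χ x)
    - fro (devM (χ x)) (epsV v x) + fro (devM (τ x)) (epsV w x)
    + ν x * fro (epsV w x) (epsV v x) + (θ x / ν x) * ∑ i, divT χ x i * divT τ x i

/-- The integrand of the square of the energy norm. -/
def egDensity (ν θ : (Fin d → ℝ) → ℝ) (τ : (Fin d → ℝ) → Fin d → Fin d → ℝ)
    (v : (Fin d → ℝ) → Fin d → ℝ) (x : Fin d → ℝ) : ℝ :=
  ν x * fro (epsV v x) (epsV v x) + (ν x)⁻¹ * fro (devM (τ x)) (devM (τ x))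
    + (θ x / ν x) * ∑ i, divT τ x i ^ 2

/-- The integrand of the square of the full norm. -/
def fullDensity (ν θ : (Fin d → ℝ) → ℝ) (τ : (Fin d → ℝ) → Fin d → Fin d → ℝ)
    (v : (Fin d → ℝ) → Fin d → ℝ) (x : Fin d → ℝ) : ℝ :=
  ν x * fro (jac v x) (jac v x) + (ν x / θ x) * ∑ i, v x i ^ 2 + (ν x)⁻¹ * fro (τ x) (τ x)
    + (θ x / ν x) * ∑ i, divT τ x i ^ 2

variable {v x} {ν θ : (Fin d → ℝ) → ℝ} {χ τ : (Fin d → ℝ) → Fin d → Fin d → ℝ}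
  {w : (Fin d → ℝ) → Fin d → ℝ}

lemma egDensity_eq_egInner : egDensity ν θ χ w x =
    egInner (ν x) (θ x / ν x) (epsV w x, devM (χ x), divT χ x)
      (epsV w x, devM (χ x), divT χ x) := by
  simp only [egDensity, egInner, sq]

lemma egDensity_nonneg (hν : 0 ≤ ν x) (hθ : 0 ≤ θ x) : 0 ≤ egDensity ν θ χ w x := by
  rw [egDensity_eq_egInner]
  exact egInner_self_nonneg hν (div_nonneg hθ hν) _

lemma formDensity_sub_nullDensity_eq_egInner (hν : ν x ≠ 0) (hθ : θ x ≠ 0) :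
    formDensity ν θ χ w τ v x - 2 * nullDensity χ v x =
      egInner (ν x) (θ x / ν x) (epsV w x, devM (χ x), divT χ x)
        (dualTriple (ν x) (θ x / ν x) (τ x) (epsV v x) (omegaV v x) (v x) (divT τ x)) := by
  rw [egInner_dualTriple hν (div_ne_zero hθ hν) _ _ _ _ (sum_diag_omegaV v x), epsV_add_omegaV]
  rfl

lemma egInner_dualTriple_self_le (hν : 0 < ν x) (hθ : 0 < θ x) :
    egInner (ν x) (θ x / ν x)
        (dualTriple (ν x) (θ x / ν x) (τ x) (epsV v x) (omegaV v x) (v x) (divT τ x))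
        (dualTriple (ν x) (θ x / ν x) (τ x) (epsV v x) (omegaV v x) (v x) (divT τ x)) ≤
      4 * (fullDensity ν θ τ v x - nullDensity τ v x) := by
  rw [egInner_dualTriple_self hν.ne' (div_pos hθ hν).ne' _ (fro_epsV_omegaV v x)
    (sum_diag_omegaV v x), epsV_add_omegaV, inv_div]
  have h₁ := fro_self_nonneg (epsV v x)
  have h₂ := fro_self_nonneg (devM (τ x))
  exact sub_le_self _ (by positivity)

lemma nullDensity_le_fullDensity (hν : 0 < ν x) (hθ : 0 < θ x) :
    nullDensity τ v x ≤ fullDensity ν θ τ v x := by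
  have h := (egInner_self_nonneg hν.le (div_pos hθ hν).le _).trans
    (egInner_dualTriple_self_le (τ := τ) (v := v) hν hθ)
  linarith

lemma sq_formDensity_sub_nullDensity_le (hν : 0 < ν x) (hθ : 0 < θ x) :
    (formDensity ν θ χ w τ v x - 2 * nullDensity χ v x) ^ 2 ≤
      egDensity ν θ χ w x * (4 * (fullDensity ν θ τ v x - nullDensity τ v x)) := by
  rw [formDensity_sub_nullDensity_eq_egInner hν.ne' hθ.ne']
  refine (sq_egInner_le hν.le (div_pos hθ hν).le _ _).trans ?_
  rw [← egDensity_eq_egInner]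
  exact mul_le_mul_of_nonneg_left (egInner_dualTriple_self_le hν hθ)
    (egDensity_nonneg hν.le hθ.le)

end Densities

section WeightedFrobenius

variable {d : ℕ} {X : Type*} [MeasurableSpace X] {μ : Measure X} {k : X → ℝ}
  {S T : X → Fin d → Fin d → ℝ}

lemma aestronglyMeasurable_fro (hS : AEStronglyMeasurable S μ) (hT : AEStronglyMeasurable T μ) :
    AEStronglyMeasurable (fun x => fro (S x) (T x)) μ :=
  Continuous.comp_aestronglyMeasurable (f := fun x => (S x, T x)) continuous_fro (hS.prodMk hT)

lemma integrable_mul_fro (hk : AEMeasurable k μ) (hS : AEStronglyMeasurable S μ)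
    (hT : AEStronglyMeasurable T μ) (hk₀ : ∀ᵐ x ∂μ, 0 < k x)
    (hkS : Integrable (fun x => k x * fro (S x) (S x)) μ)
    (hkT : Integrable (fun x => k x * fro (T x) (T x)) μ) :
    Integrable (fun x => k x * fro (S x) (T x)) μ := by
  refine integrable_of_sq_le_mul (hk.aestronglyMeasurable.mul (aestronglyMeasurable_fro hS hT))
    hkS hkT ?_
  filter_upwards [hk₀] with x hx
  refine ⟨mul_nonneg hx.le (fro_self_nonneg _), mul_nonneg hx.le (fro_self_nonneg _), ?_⟩
  linarith [mul_le_mul_of_nonneg_left (sq_fro_le (S x) (T x)) (sq_nonneg (k x))]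

lemma integrable_fro (hS : AEStronglyMeasurable S μ) (hT : AEStronglyMeasurable T μ)
    (hk₀ : ∀ᵐ x ∂μ, 0 < k x) (hkS : Integrable (fun x => k x * fro (S x) (S x)) μ)
    (hkT : Integrable (fun x => (k x)⁻¹ * fro (T x) (T x)) μ) :
    Integrable (fun x => fro (S x) (T x)) μ := by
  refine integrable_of_sq_le_mul (aestronglyMeasurable_fro hS hT) hkS hkT ?_
  filter_upwards [hk₀] with x hx
  refine ⟨mul_nonneg hx.le (fro_self_nonneg _),
    mul_nonneg (inv_nonneg.2 hx.le) (fro_self_nonneg _), ?_⟩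
  calc fro (S x) (T x) ^ 2 ≤ fro (S x) (S x) * fro (T x) (T x) := sq_fro_le _ _
    _ = k x * fro (S x) (S x) * ((k x)⁻¹ * fro (T x) (T x)) := by field_simp

lemma integrable_mul_fro_self_of_le (hk : AEMeasurable k μ) (hS : AEStronglyMeasurable S μ)
    (hk₀ : ∀ᵐ x ∂μ, 0 < k x) (hle : ∀ x, fro (S x) (S x) ≤ fro (T x) (T x))
    (hkT : Integrable (fun x => k x * fro (T x) (T x)) μ) :
    Integrable (fun x => k x * fro (S x) (S x)) μ := by
  refine hkT.mono' (hk.aestronglyMeasurable.mul (aestronglyMeasurable_fro hS hS)) ?_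
  filter_upwards [hk₀] with x hx
  rw [Real.norm_of_nonneg (mul_nonneg hx.le (fro_self_nonneg _))]
  exact mul_le_mul_of_nonneg_left (hle x) hx.le

end WeightedFrobenius

section Partials

variable {d : ℕ} {Ω : Set (Fin d → ℝ)}

lemma continuousOn_pd {f : (Fin d → ℝ) → ℝ} (hΩ : IsOpen Ω) (hf : ContDiffOn ℝ 1 f Ω)
    (j : Fin d) : ContinuousOn (fun x => pd f x j) Ω :=
  (hf.continuousOn_fderiv_of_isOpen hΩ le_rfl).clm_apply continuousOn_const

lemma continuousOn_divT {τ : (Fin d → ℝ) → Fin d → Fin d → ℝ} (hΩ : IsOpen Ω)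
    (hτ : ∀ i j, ContDiffOn ℝ 1 (fun x => τ x i j) Ω) : ContinuousOn (divT τ) Ω :=
  continuousOn_pi.2 fun i => continuousOn_finsetSum _ fun j _ => continuousOn_pd hΩ (hτ i j) j

lemma continuousOn_epsV {v : (Fin d → ℝ) → Fin d → ℝ} (hΩ : IsOpen Ω) (hv : ContDiff ℝ 1 v) :
    ContinuousOn (epsV v) Ω := by
  have hjac (i j : Fin d) : ContinuousOn (fun x => jac v x i j) Ω :=
    continuousOn_pd hΩ (contDiff_pi.1 hv i).contDiffOn j
  exact continuousOn_pi.2 fun i => continuousOn_pi.2 fun j =>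
    ((hjac i j).add (hjac j i)).div_const 2

end Partials

namespace Admissible

variable {d : ℕ} {Ω : Set (Fin d → ℝ)} {ν θ : (Fin d → ℝ) → ℝ}
  {χ τ : (Fin d → ℝ) → Fin d → Fin d → ℝ} {w v : (Fin d → ℝ) → Fin d → ℝ}

lemma contDiffOn_stress (h : Admissible Ω ν θ τ v) (i j : Fin d) :
    ContDiffOn ℝ 1 (fun x => τ x i j) Ω :=
  h.1 i j

lemma contDiff_velocity (h : Admissible Ω ν θ τ v) : ContDiff ℝ 1 v :=
  h.2.1

lemma hasCompactSupport (h : Admissible Ω ν θ τ v) : HasCompactSupport v :=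
  h.2.2.1

lemma tsupport_subset (h : Admissible Ω ν θ τ v) : tsupport v ⊆ Ω :=
  h.2.2.2.1

lemma integrableOn_stress (h : Admissible Ω ν θ τ v) :
    IntegrableOn (fun x => (ν x)⁻¹ * fro (τ x) (τ x)) Ω :=
  h.2.2.2.2.1

lemma integrableOn_jac (h : Admissible Ω ν θ τ v) :
    IntegrableOn (fun x => ν x * fro (jac v x) (jac v x)) Ω :=
  h.2.2.2.2.2.1

lemma integrableOn_velocity (h : Admissible Ω ν θ τ v) :
    IntegrableOn (fun x => (ν x / θ x) * ∑ i, (v x i) ^ 2) Ω :=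
  h.2.2.2.2.2.2.1

lemma integrableOn_divT (h : Admissible Ω ν θ τ v) :
    IntegrableOn (fun x => (θ x / ν x) * ∑ i, (divT τ x i) ^ 2) Ω :=
  h.2.2.2.2.2.2.2

lemma aestronglyMeasurable_stress (h : Admissible Ω ν θ τ v) (hΩ : IsOpen Ω) :
    AEStronglyMeasurable τ (volume.restrict Ω) :=
  (continuousOn_pi.2 fun i => continuousOn_pi.2 fun j =>
    (h.contDiffOn_stress i j).continuousOn).aestronglyMeasurable hΩ.measurableSet

lemma aestronglyMeasurable_devM (h : Admissible Ω ν θ τ v) (hΩ : IsOpen Ω) :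
    AEStronglyMeasurable (fun x => devM (τ x)) (volume.restrict Ω) :=
  continuous_devM.comp_aestronglyMeasurable (h.aestronglyMeasurable_stress hΩ)

lemma aestronglyMeasurable_epsV (h : Admissible Ω ν θ τ v) (hΩ : IsOpen Ω) :
    AEStronglyMeasurable (epsV v) (volume.restrict Ω) :=
  (continuousOn_epsV hΩ h.contDiff_velocity).aestronglyMeasurable hΩ.measurableSet

lemma integrableOn_fullDensity (h : Admissible Ω ν θ τ v) :
    IntegrableOn (fullDensity ν θ τ v) Ω :=
  ((h.integrableOn_jac.add h.integrableOn_velocity).add h.integrableOn_stress).add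
    h.integrableOn_divT

lemma normFull_eq_sqrt_integral (h : Admissible Ω ν θ τ v) :
    normFull Ω ν θ τ v = √(∫ x in Ω, fullDensity ν θ τ v x) := by
  have h₁₂ := h.integrableOn_jac.fun_add h.integrableOn_velocity
  simp only [fullDensity, normFull]
  rw [integral_add (h₁₂.fun_add h.integrableOn_stress) h.integrableOn_divT,
    integral_add h₁₂ h.integrableOn_stress, integral_add h.integrableOn_jac h.integrableOn_velocity]

lemma integrableOn_epsV (h : Admissible Ω ν θ τ v) (hΩ : IsOpen Ω)
    (hνm : AEMeasurable ν (volume.restrict Ω)) (hν : ∀ᵐ x ∂volume.restrict Ω, 0 < ν x) :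
    IntegrableOn (fun x => ν x * fro (epsV v x) (epsV v x)) Ω :=
  integrable_mul_fro_self_of_le hνm (h.aestronglyMeasurable_epsV hΩ) hν (fro_epsV_self_le v)
    h.integrableOn_jac

lemma integrableOn_devM (h : Admissible Ω ν θ τ v) (hΩ : IsOpen Ω)
    (hνm : AEMeasurable ν (volume.restrict Ω)) (hν : ∀ᵐ x ∂volume.restrict Ω, 0 < ν x) :
    IntegrableOn (fun x => (ν x)⁻¹ * fro (devM (τ x)) (devM (τ x))) Ω :=
  integrable_mul_fro_self_of_le hνm.inv (h.aestronglyMeasurable_devM hΩ)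
    (hν.mono fun _ => inv_pos.2) (fun x => fro_devM_self_le (τ x)) h.integrableOn_stress

lemma integrableOn_egDensity (h : Admissible Ω ν θ τ v) (hΩ : IsOpen Ω)
    (hνm : AEMeasurable ν (volume.restrict Ω)) (hν : ∀ᵐ x ∂volume.restrict Ω, 0 < ν x) :
    IntegrableOn (egDensity ν θ τ v) Ω :=
  ((h.integrableOn_epsV hΩ hνm hν).add (h.integrableOn_devM hΩ hνm hν)).add h.integrableOn_divT

lemma normEg_eq_sqrt_integral (h : Admissible Ω ν θ τ v) (hΩ : IsOpen Ω)
    (hνm : AEMeasurable ν (volume.restrict Ω)) (hν : ∀ᵐ x ∂volume.restrict Ω, 0 < ν x) :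
    normEg Ω ν θ τ v = √(∫ x in Ω, egDensity ν θ τ v x) := by
  have hε := h.integrableOn_epsV hΩ hνm hν
  have hdev := h.integrableOn_devM hΩ hνm hν
  simp only [egDensity, normEg]
  rw [integral_add (hε.fun_add hdev) h.integrableOn_divT, integral_add hε hdev]

lemma integrableOn_fro_epsV_stress (h : Admissible Ω ν θ χ w) (h' : Admissible Ω ν θ τ v)
    (hΩ : IsOpen Ω) (hνm : AEMeasurable ν (volume.restrict Ω))
    (hν : ∀ᵐ x ∂volume.restrict Ω, 0 < ν x) :
    IntegrableOn (fun x => fro (epsV w x) (τ x)) Ω :=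
  integrable_fro (h.aestronglyMeasurable_epsV hΩ) (h'.aestronglyMeasurable_stress hΩ) hν
    (h.integrableOn_epsV hΩ hνm hν) h'.integrableOn_stress

lemma integrableOn_fro_devM_epsV (h : Admissible Ω ν θ χ w) (h' : Admissible Ω ν θ τ v)
    (hΩ : IsOpen Ω) (hνm : AEMeasurable ν (volume.restrict Ω))
    (hν : ∀ᵐ x ∂volume.restrict Ω, 0 < ν x) :
    IntegrableOn (fun x => fro (devM (χ x)) (epsV v x)) Ω := by
  simp only [fro_comm (devM _)]
  exact integrable_fro (h'.aestronglyMeasurable_epsV hΩ) (h.aestronglyMeasurable_devM hΩ) hν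
    (h'.integrableOn_epsV hΩ hνm hν) (h.integrableOn_devM hΩ hνm hν)

lemma integrableOn_inv_mul_fro_devM_stress (h : Admissible Ω ν θ χ w)
    (h' : Admissible Ω ν θ τ v) (hΩ : IsOpen Ω) (hνm : AEMeasurable ν (volume.restrict Ω))
    (hν : ∀ᵐ x ∂volume.restrict Ω, 0 < ν x) :
    IntegrableOn (fun x => (ν x)⁻¹ * fro (devM (χ x)) (τ x)) Ω :=
  integrable_mul_fro hνm.inv (h.aestronglyMeasurable_devM hΩ) (h'.aestronglyMeasurable_stress hΩ)
    (hν.mono fun _ => inv_pos.2) (h.integrableOn_devM hΩ hνm hν) h'.integrableOn_stress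

lemma integrableOn_mul_fro_epsV_epsV (h : Admissible Ω ν θ χ w) (h' : Admissible Ω ν θ τ v)
    (hΩ : IsOpen Ω) (hνm : AEMeasurable ν (volume.restrict Ω))
    (hν : ∀ᵐ x ∂volume.restrict Ω, 0 < ν x) :
    IntegrableOn (fun x => ν x * fro (epsV w x) (epsV v x)) Ω :=
  integrable_mul_fro hνm (h.aestronglyMeasurable_epsV hΩ) (h'.aestronglyMeasurable_epsV hΩ) hν
    (h.integrableOn_epsV hΩ hνm hν) (h'.integrableOn_epsV hΩ hνm hν)

lemma integrableOn_mul_divT_divT (h : Admissible Ω ν θ χ w) (h' : Admissible Ω ν θ τ v)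
    (hΩ : IsOpen Ω) (hνm : AEMeasurable ν (volume.restrict Ω))
    (hθm : AEMeasurable θ (volume.restrict Ω)) (hν : ∀ᵐ x ∂volume.restrict Ω, 0 < ν x)
    (hθ : ∀ᵐ x ∂volume.restrict Ω, 0 < θ x) :
    IntegrableOn (fun x => θ x / ν x * ∑ i, divT χ x i * divT τ x i) Ω := by
  have hχ := continuousOn_pi.1 (continuousOn_divT hΩ h.contDiffOn_stress)
  have hτ := continuousOn_pi.1 (continuousOn_divT hΩ h'.contDiffOn_stress)
  have hmeas : AEStronglyMeasurable (fun x => ∑ i, divT χ x i * divT τ x i)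
      (volume.restrict Ω) :=
    (continuousOn_finsetSum _ fun i _ => (hχ i).mul (hτ i)).aestronglyMeasurable hΩ.measurableSet
  refine integrable_of_sq_le_mul ((hθm.div hνm).aestronglyMeasurable.mul hmeas)
    h.integrableOn_divT h'.integrableOn_divT ?_
  filter_upwards [hν, hθ] with x hνx hθx
  refine ⟨by positivity, by positivity, ?_⟩
  calc (θ x / ν x * ∑ i, divT χ x i * divT τ x i) ^ 2
      = (θ x / ν x) ^ 2 * (∑ i, divT χ x i * divT τ x i) ^ 2 := mul_pow _ _ _
    _ ≤ (θ x / ν x) ^ 2 * ((∑ i, divT χ x i ^ 2) * ∑ i, divT τ x i ^ 2) := by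
        gcongr
        exact Finset.sum_mul_sq_le_sq_mul_sq _ _ _
    _ = _ := by ring

lemma integrableOn_formDensity_and_setIntegral_eq (h : Admissible Ω ν θ χ w)
    (h' : Admissible Ω ν θ τ v) (hΩ : IsOpen Ω) (hνm : AEMeasurable ν (volume.restrict Ω))
    (hθm : AEMeasurable θ (volume.restrict Ω)) (hν : ∀ᵐ x ∂volume.restrict Ω, 0 < ν x)
    (hθ : ∀ᵐ x ∂volume.restrict Ω, 0 < θ x) :
    IntegrableOn (formDensity ν θ χ w τ v) Ω ∧
      ∫ x in Ω, formDensity ν θ χ w τ v x = Bform Ω ν θ χ w τ v := by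
  have h₁ := h.integrableOn_inv_mul_fro_devM_stress h' hΩ hνm hν
  have h₂ := (h.integrableOn_fro_epsV_stress h' hΩ hνm hν).const_mul 2
  have h₃ := (h'.integrableOn_fro_epsV_stress h hΩ hνm hν).const_mul 2
  have h₄ := h.integrableOn_fro_devM_epsV h' hΩ hνm hν
  have h₅ := h'.integrableOn_fro_devM_epsV h hΩ hνm hν
  have h₆ := h.integrableOn_mul_fro_epsV_epsV h' hΩ hνm hν
  have h₇ := h.integrableOn_mul_divT_divT h' hΩ hνm hθm hν hθ
  have h₁₂ := h₁.fun_sub h₂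
  have h₁₃ := h₁₂.fun_add h₃
  have h₁₄ := h₁₃.fun_sub h₄
  have h₁₅ := h₁₄.fun_add h₅
  have h₁₆ := h₁₅.fun_add h₆
  refine ⟨h₁₆.fun_add h₇, ?_⟩
  simp only [formDensity, Bform]
  rw [integral_add h₁₆ h₇, integral_add h₁₅ h₆, integral_add h₁₄ h₅, integral_sub h₁₃ h₄,
    integral_add h₁₂ h₃, integral_sub h₁ h₂, integral_const_mul, integral_const_mul]

lemma sq_Bform_le (h : Admissible Ω ν θ χ w) (h' : Admissible Ω ν θ τ v) (hΩ : IsOpen Ω)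
    (hνm : AEMeasurable ν (volume.restrict Ω)) (hθm : AEMeasurable θ (volume.restrict Ω))
    (hν : ∀ᵐ x ∂volume.restrict Ω, 0 < ν x) (hθ : ∀ᵐ x ∂volume.restrict Ω, 0 < θ x) :
    Bform Ω ν θ χ w τ v ^ 2 ≤
      (∫ x in Ω, egDensity ν θ χ w x) * (4 * ∫ x in Ω, fullDensity ν θ τ v x) := by
  obtain ⟨hB, hB_eq⟩ := h.integrableOn_formDensity_and_setIntegral_eq h' hΩ hνm hθm hν hθ
  have hF := h'.integrableOn_fullDensity
  have hnull {σ : (Fin d → ℝ) → Fin d → Fin d → ℝ} {u : (Fin d → ℝ) → Fin d → ℝ}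
      (hσ : Admissible Ω ν θ σ u) :
      IntegrableOn (nullDensity σ v) Ω ∧ ∫ x in Ω, nullDensity σ v x = 0 :=
    ⟨integrableOn_nullDensity hΩ hσ.contDiffOn_stress h'.contDiff_velocity h'.hasCompactSupport
        h'.tsupport_subset,
      setIntegral_nullDensity_eq_zero hΩ hσ.contDiffOn_stress h'.contDiff_velocity
        h'.hasCompactSupport h'.tsupport_subset⟩
  obtain ⟨hχ, hχ₀⟩ := hnull h
  obtain ⟨hτ, hτ₀⟩ := hnull h'
  have hcs := sq_integral_le_integral_mul_integral (hB.fun_sub (hχ.const_mul 2))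
    (h.integrableOn_egDensity hΩ hνm hν) ((hF.fun_sub hτ).const_mul 4) <| by
      filter_upwards [hν, hθ] with x hνx hθx
      exact ⟨egDensity_nonneg hνx.le hθx.le,
        mul_nonneg zero_le_four (sub_nonneg.2 (nullDensity_le_fullDensity hνx hθx)),
        sq_formDensity_sub_nullDensity_le hνx hθx⟩
  rwa [integral_sub hB (hχ.const_mul 2), integral_const_mul, hχ₀, hB_eq, mul_zero, sub_zero,
    integral_const_mul, integral_sub hF hτ, hτ₀, sub_zero] at hcs

end Admissible

theorem stmt_8_general {d : ℕ} {Ω : Set (Fin d → ℝ)} (hΩ : IsOpen Ω) {ν θ : (Fin d → ℝ) → ℝ}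
    (hνm : AEMeasurable ν (volume.restrict Ω)) (hθm : AEMeasurable θ (volume.restrict Ω))
    (hν : ∀ᵐ x ∂volume.restrict Ω, 0 < ν x) (hθ : ∀ᵐ x ∂volume.restrict Ω, 0 < θ x)
    {χ τ : (Fin d → ℝ) → Fin d → Fin d → ℝ} {w v : (Fin d → ℝ) → Fin d → ℝ}
    (h : Admissible Ω ν θ χ w) (h' : Admissible Ω ν θ τ v) :
    Bform Ω ν θ χ w τ v ≤ 2 * normEg Ω ν θ χ w * normFull Ω ν θ τ v := by
  have hE₀ : 0 ≤ ∫ x in Ω, egDensity ν θ χ w x :=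
    integral_nonneg_of_ae <| (hν.and hθ).mono fun _ hx => egDensity_nonneg hx.1.le hx.2.le
  calc Bform Ω ν θ χ w τ v
      ≤ √((∫ x in Ω, egDensity ν θ χ w x) * (4 * ∫ x in Ω, fullDensity ν θ τ v x)) :=
        Real.le_sqrt_of_sq_le (h.sq_Bform_le h' hΩ hνm hθm hν hθ)
    _ = 2 * normEg Ω ν θ χ w * normFull Ω ν θ τ v := by
        rw [Real.sqrt_mul hE₀, Real.sqrt_mul zero_le_four, show (4 : ℝ) = 2 ^ 2 by norm_num,
          Real.sqrt_sq zero_le_two, h.normEg_eq_sqrt_integral hΩ hνm hν,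
          h'.normFull_eq_sqrt_integral]
        ring

/-- Robust continuity, Lemma 5.2:
`B_θ((χ,w),(τ,v)) ≤ 2 |||(χ,w)|||_{eg,θ} · |||(τ,v)|||_{full,θ}`. -/
theorem stmt_8 (d : ℕ) (Ω : Set (Fin d → ℝ)) (hΩ : IsOpen Ω)
    (ν θ : (Fin d → ℝ) → ℝ) (hνmeas : Measurable ν) (hθmeas : Measurable θ)
    (lam Lam θ₀ θ₁ : ℝ) (hlam : 0 < lam) (hνbd : ∀ x ∈ Ω, lam ≤ ν x ∧ ν x ≤ Lam)
    (hθ₀ : 0 < θ₀) (hθbd : ∀ x ∈ Ω, θ₀ ≤ θ x ∧ θ x ≤ θ₁)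
    (χ : (Fin d → ℝ) → Fin d → Fin d → ℝ) (w : (Fin d → ℝ) → Fin d → ℝ)
    (τ : (Fin d → ℝ) → Fin d → Fin d → ℝ) (v : (Fin d → ℝ) → Fin d → ℝ)
    (hadm₁ : Admissible Ω ν θ χ w) (hadm₂ : Admissible Ω ν θ τ v) :
    Bform Ω ν θ χ w τ v ≤ 2 * normEg Ω ν θ χ w * normFull Ω ν θ τ v :=
  stmt_8_general hΩ hνmeas.aemeasurable hθmeas.aemeasurable
    (ae_restrict_of_forall_mem hΩ.measurableSet fun x hx => hlam.trans_le (hνbd x hx).1)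
    (ae_restrict_of_forall_mem hΩ.measurableSet fun x hx => hθ₀.trans_le (hθbd x hx).1)
    hadm₁ hadm₂
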